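/- Let 0 < a ≤ 2 and let r ≥ 1 be an integer. For (r₁,r₂) ∈ {0,…,N−1}² with gcd(r₁,r₂,N) = 1, let S_N(r₁,r₂) := #{(x,y) ∈ ℤ² : |x| < √N/2, |y| < a√N/2, r₁x + r₂y ≡ 0 (mod N)}. Then lim_{N→∞} #{(r₁,r₂) : gcd(r₁,r₂,N) = 1 and S_N(r₁,r₂) = r} / #{(r₁,r₂) : gcd(r₁,r₂,N) = 1} = c_{2,r}(a), where c_{2,r}(a) = 0 if r is even, c_{2,1}(a) = 1 − 3a/π², and c_{2,2k+1}(a) = (3a/π²)·(1/k² − 1/(k+1)²) for every integer k ≥ 1. -/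

import Mathlib

open Filter

noncomputable def bx (X : ℝ) : Finset ℤ := Finset.Ioo (-⌈X⌉) ⌈X⌉

lemma mem_bx {X : ℝ} {n : ℤ} : n ∈ bx X ↔ |(n:ℝ)| < X := by
  unfold bx
  rw [Finset.mem_Ioo, abs_lt, Int.lt_ceil, neg_lt, Int.lt_ceil]
  push_cast
  constructor <;> rintro ⟨h1, h2⟩ <;> constructor <;> linarith

lemma card_bx {X : ℝ} (hX : 0 < X) : ((bx X).card : ℝ) = 2 * ⌈X⌉ - 1 := by
  unfold bx
  rw [Int.card_Ioo]
  have h : 0 < ⌈X⌉ := Int.ceil_pos.mpr hX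
  have : (((⌈X⌉ - -⌈X⌉ - 1).toNat : ℤ) : ℝ) = 2 * ⌈X⌉ - 1 := by
    rw [Int.toNat_of_nonneg (by omega)]; push_cast; ring
  exact_mod_cast this

noncomputable def box (X Y : ℝ) : Finset (ℤ × ℤ) := bx X ×ˢ bx Y

lemma mem_box {X Y : ℝ} {w : ℤ × ℤ} : w ∈ box X Y ↔ |(w.1:ℝ)| < X ∧ |(w.2:ℝ)| < Y := by
  simp [box, Finset.mem_product, mem_bx]

noncomputable def prim (X Y : ℝ) : Finset (ℤ × ℤ) := (box X Y).filter (fun w => Int.gcd w.1 w.2 = 1)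

lemma card_box0 {X Y : ℝ} (hX : 0 < X) (hY : 0 < Y) :
    (((box X Y).erase 0).card : ℝ) = (2 * ⌈X⌉ - 1) * (2 * ⌈Y⌉ - 1) - 1 := by
  have h0 : (0 : ℤ × ℤ) ∈ box X Y := by simp [mem_box, hX, hY]
  have := Finset.card_erase_add_one h0
  have h2 : (((box X Y).erase 0).card : ℝ) + 1 = (box X Y).card := by exact_mod_cast this
  have h3 : ((box X Y).card : ℝ) = (2 * ⌈X⌉ - 1) * (2 * ⌈Y⌉ - 1) := by
    rw [box, Finset.card_product, Nat.cast_mul, card_bx hX, card_bx hY]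
  linarith

/-- uniform bound -/
lemma card_box0_le {α β : ℝ} (hα : 0 < α) (hβ : 0 < β) :
    ∃ C : ℝ, 0 < C ∧ ∀ T : ℝ, 0 < T → (((box (α * T) (β * T)).erase 0).card : ℝ) ≤ C * T ^ 2 := by
  refine ⟨4 * α * β + 2 * (α + β) * (α + β), by positivity, fun T hT => ?_⟩
  rw [card_box0 (by positivity) (by positivity)]
  have h1 := Int.ceil_lt_add_one (α * T)
  have h2 := Int.ceil_lt_add_one (β * T)
  have h3 : (1 : ℝ) ≤ ⌈α * T⌉ := by
    exact_mod_cast Int.ceil_pos.mpr (show 0 < α * T by positivity)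
  have h4 : (1 : ℝ) ≤ ⌈β * T⌉ := by
    exact_mod_cast Int.ceil_pos.mpr (show 0 < β * T by positivity)
  by_cases h : (α + β) * T ≤ 1
  · have e1 : ⌈α * T⌉ ≤ 1 := by
      apply Int.ceil_le.mpr; push_cast; nlinarith [mul_pos hβ hT]
    have e2 : ⌈β * T⌉ ≤ 1 := by
      apply Int.ceil_le.mpr; push_cast; nlinarith [mul_pos hα hT]
    have e1' : (⌈α * T⌉ : ℝ) = 1 := le_antisymm (by exact_mod_cast e1) h3
    have e2' : (⌈β * T⌉ : ℝ) = 1 := le_antisymm (by exact_mod_cast e2) h4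
    rw [e1', e2']
    have : 0 ≤ (4 * α * β + 2 * (α + β) * (α + β)) * T ^ 2 := by positivity
    linarith
  · push Not at h
    have : (2 * (⌈α * T⌉ : ℝ) - 1) * (2 * ⌈β * T⌉ - 1) ≤ (2 * (α * T) + 1) * (2 * (β * T) + 1) := by
      apply mul_le_mul <;> linarith
    have h5 : (α + β) * T * 1 ≤ (α + β) * T * ((α + β) * T) := by
      apply mul_le_mul_of_nonneg_left h.le; positivity
    nlinarith

lemma prim_subset {X Y : ℝ} : prim X Y ⊆ (box X Y).erase 0 := by
  intro w hw
  rw [prim, Finset.mem_filter] at hw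
  rw [Finset.mem_erase]
  refine ⟨?_, hw.1⟩
  rintro rfl
  simp at hw

lemma tendsto_box0 {α β : ℝ} (hα : 0 < α) (hβ : 0 < β) :
    Tendsto (fun T : ℝ => (((box (α * T) (β * T)).erase 0).card : ℝ) / T ^ 2) atTop
      (nhds (4 * α * β)) := by
  have c : ∀ γ : ℝ, 0 < γ → Tendsto (fun T : ℝ => (⌈γ * T⌉ : ℝ) / T) atTop (nhds γ) := by
    intro γ hγ
    have hinv : Tendsto (fun T : ℝ => γ + 1 / T) atTop (nhds γ) := by
      simpa using (tendsto_inv_atTop_zero (𝕜 := ℝ)).const_add γ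
    apply tendsto_of_tendsto_of_tendsto_of_le_of_le' tendsto_const_nhds hinv
    · filter_upwards [eventually_gt_atTop 0] with T hT
      rw [le_div_iff₀ hT]
      exact Int.le_ceil _
    · filter_upwards [eventually_gt_atTop 0] with T hT
      rw [div_le_iff₀ hT]
      have := Int.ceil_lt_add_one (γ * T)
      have e : (γ + 1 / T) * T = γ * T + 1 := by field_simp
      linarith
  have hinv : Tendsto (fun T : ℝ => 1 / T) atTop (nhds 0) := by
    simpa using tendsto_inv_atTop_zero (𝕜 := ℝ)
  have := ((((c α hα).const_mul 2).sub hinv).mul (((c β hβ).const_mul 2).sub hinv)).sub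
    (hinv.mul hinv)
  refine (this.congr' ?_).trans (by apply le_of_eq; congr 1; ring)
  filter_upwards [eventually_gt_atTop 0] with T hT
  rw [card_box0 (by positivity) (by positivity)]
  field_simp

open ArithmeticFunction in
lemma sum_moebius_dvd {n : ℕ} :
    ∑ g ∈ n.divisors, (moebius g : ℤ) = if n = 1 then 1 else 0 := by
  rw [← coe_mul_zeta_apply, moebius_mul_coe_zeta, one_apply]

open ArithmeticFunction in
lemma prim_card_eq {X Y : ℝ} :
    ((prim X Y).card : ℝ) =
      ∑' g : ℕ, (moebius g : ℝ) * (((box (X / g) (Y / g)).erase 0).card : ℝ) := by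
  -- cutoff
  obtain ⟨M, hM⟩ : ∃ M : ℕ, X ≤ M ∧ Y ≤ M := by
    obtain ⟨M, hM⟩ := exists_nat_ge (max X Y)
    exact ⟨M, le_trans (le_max_left _ _) hM, le_trans (le_max_right _ _) hM⟩
  have key : ∀ w ∈ (box X Y).erase 0, (if Int.gcd w.1 w.2 = 1 then (1:ℤ) else 0) =
      ∑ g ∈ Finset.Icc 1 M, if g ∣ Int.gcd w.1 w.2 then moebius g else 0 := by
    intro w hw
    rw [Finset.mem_erase, mem_box] at hw
    have hg0 : Int.gcd w.1 w.2 ≠ 0 := by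
      intro h
      rw [Int.gcd_eq_zero_iff] at h
      exact hw.1 (Prod.ext h.1 h.2)
    rw [← sum_moebius_dvd, ← Finset.sum_filter]
    apply Finset.sum_congr _ (fun _ _ => rfl)
    ext g
    simp only [Nat.mem_divisors, Finset.mem_filter, Finset.mem_Icc]
    constructor
    · rintro ⟨h1, h2⟩
      refine ⟨⟨Nat.pos_of_dvd_of_pos h1 (Nat.pos_of_ne_zero h2), ?_⟩, h1⟩
      have hd1 : (g:ℤ) ∣ w.1 := (Int.natCast_dvd_natCast.mpr h1).trans (Int.gcd_dvd_left ..)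
      have hd2 : (g:ℤ) ∣ w.2 := (Int.natCast_dvd_natCast.mpr h1).trans (Int.gcd_dvd_right ..)
      have aux : ∀ z : ℤ, ∀ Z : ℝ, z ≠ 0 → |(z:ℝ)| < Z → Z ≤ M → (g:ℤ) ∣ z → g ≤ M := by
        intro z Z hz hzZ hZ hgz
        have : (g:ℤ) ≤ |z| := Int.le_of_dvd (abs_pos.mpr hz) ((dvd_abs _ _).mpr hgz)
        have h5 : (g:ℝ) ≤ |(z:ℝ)| := by exact_mod_cast this
        have : (g:ℝ) ≤ M := by linarith
        exact_mod_cast this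
      by_cases h : w.1 = 0
      · have : w.2 ≠ 0 := fun h' => hw.1 (Prod.ext h h')
        exact aux _ _ this hw.2.2 hM.2 hd2
      · exact aux _ _ h hw.2.1 hM.1 hd1
    · rintro ⟨_, h2⟩
      exact ⟨h2, hg0⟩
  have h1 : ((prim X Y).card : ℤ) =
      ∑ w ∈ (box X Y).erase 0, (if Int.gcd w.1 w.2 = 1 then (1:ℤ) else 0) := by
    rw [← Finset.sum_filter, Finset.sum_const, nsmul_eq_mul, mul_one]
    congr 2
    ext w
    constructor
    · intro hw
      exact Finset.mem_filter.mpr ⟨prim_subset hw, (Finset.mem_filter.mp hw).2⟩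
    · intro hw
      rw [Finset.mem_filter, Finset.mem_erase] at hw
      exact Finset.mem_filter.mpr ⟨hw.1.2, hw.2⟩
  rw [Finset.sum_congr rfl key, Finset.sum_comm] at h1
  have h2 : ∀ g ∈ Finset.Icc 1 M,
      (∑ w ∈ (box X Y).erase 0, if g ∣ Int.gcd w.1 w.2 then moebius g else 0) =
      moebius g * (((box (X / g) (Y / g)).erase 0).card : ℤ) := by
    intro g hg
    rw [Finset.mem_Icc] at hg
    have hg0 : (0:ℝ) < g := by exact_mod_cast hg.1
    have hgz : (g:ℤ) ≠ 0 := by omega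
    rw [← Finset.sum_filter, Finset.sum_const, nsmul_eq_mul, mul_comm]
    congr 2
    symm
    apply Finset.card_bij (fun w _ => ((g:ℤ) * w.1, (g:ℤ) * w.2))
    · intro w hw
      rw [Finset.mem_erase, mem_box] at hw
      rw [Finset.mem_filter, Finset.mem_erase, mem_box]
      refine ⟨⟨?_, ?_, ?_⟩, ?_⟩
      · intro h
        apply hw.1
        have e1 := congrArg Prod.fst h
        have e2 := congrArg Prod.snd h
        simp at e1 e2
        exact Prod.ext (e1.resolve_left (by omega)) (e2.resolve_left (by omega))
      · have := hw.2.1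
        rw [lt_div_iff₀ hg0] at this
        push_cast
        rw [abs_mul, abs_of_pos hg0]; linarith
      · have := hw.2.2
        rw [lt_div_iff₀ hg0] at this
        push_cast
        rw [abs_mul, abs_of_pos hg0]; linarith
      · simp [Int.gcd_mul_left]
    · intro w _ w' _ h
      have e1 := congrArg Prod.fst h
      have e2 := congrArg Prod.snd h
      exact Prod.ext (mul_left_cancel₀ hgz e1) (mul_left_cancel₀ hgz e2)
    · intro w hw
      rw [Finset.mem_filter, Finset.mem_erase, mem_box] at hw
      obtain ⟨x, hx⟩ := (Int.natCast_dvd_natCast.mpr hw.2).trans (Int.gcd_dvd_left ..)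
      obtain ⟨y, hy⟩ := (Int.natCast_dvd_natCast.mpr hw.2).trans (Int.gcd_dvd_right ..)
      refine ⟨(x, y), ?_, Prod.ext hx.symm hy.symm⟩
      rw [Finset.mem_erase, mem_box]
      refine ⟨?_, ?_, ?_⟩
      · intro h
        have e1 := congrArg Prod.fst h
        have e2 := congrArg Prod.snd h
        simp only [Prod.fst_zero, Prod.snd_zero] at e1 e2
        exact hw.1.1 (Prod.ext (by rw [hx, e1]; simp) (by rw [hy, e2]; simp))
      · have := hw.1.2.1
        rw [hx] at this
        push_cast at this
        rw [abs_mul, abs_of_pos hg0] at this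
        rw [lt_div_iff₀ hg0]; linarith
      · have := hw.1.2.2
        rw [hy] at this
        push_cast at this
        rw [abs_mul, abs_of_pos hg0] at this
        rw [lt_div_iff₀ hg0]; linarith
  rw [Finset.sum_congr rfl h2] at h1
  rw [tsum_eq_sum (s := Finset.Icc 1 M)]
  · exact_mod_cast h1
  · intro g hg
    rcases Nat.eq_zero_or_pos g with rfl | hgp
    · simp
    have hgM : M < g := by
      by_contra h
      exact hg (Finset.mem_Icc.mpr ⟨hgp, by omega⟩)
    have hgM' : (M:ℝ) < g := by exact_mod_cast hgM
    have hg0 : (0:ℝ) < g := by exact_mod_cast hgp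
    have : (box (X / g) (Y / g)).erase 0 = ∅ := by
      rw [Finset.eq_empty_iff_forall_notMem]
      intro w hw
      rw [Finset.mem_erase, mem_box] at hw
      have aux : ∀ z : ℤ, ∀ Z : ℝ, Z ≤ M → |(z:ℝ)| < Z / g → z = 0 := by
        intro z Z hZ hz
        have h1 : |(z:ℝ)| < 1 := lt_of_lt_of_le hz (by rw [div_le_one hg0]; linarith)
        have : |z| < 1 := by exact_mod_cast h1
        exact Int.abs_lt_one_iff.mp this
      exact hw.1 (Prod.ext (aux _ _ hM.1 hw.2.1) (aux _ _ hM.2 hw.2.2))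
    rw [this]; simp

open ArithmeticFunction in
lemma tsum_moebius : ∑' g : ℕ, (moebius g : ℝ) * (1 / (g:ℝ) ^ 2) = 6 / Real.pi ^ 2 := by
  have h := LSeries_zeta_mul_Lseries_moebius (s := 2) (by norm_num)
  rw [LSeries_zeta_eq_riemannZeta (by norm_num), riemannZeta_two] at h
  have h2 : LSeries (fun n => ((moebius n : ℤ) : ℂ)) 2 =
      ((∑' g : ℕ, (moebius g : ℝ) * (1 / (g:ℝ) ^ 2) : ℝ) : ℂ) := by
    rw [LSeries, Complex.ofReal_tsum]
    congr 1
    ext n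
    rcases Nat.eq_zero_or_pos n with rfl | hn
    · simp
    rw [LSeries.term_of_ne_zero hn.ne']
    push_cast
    rw [show (2:ℂ) = ((2:ℕ):ℂ) by norm_num, Complex.cpow_natCast]
    ring
  rw [h2] at h
  have h3 : Real.pi ^ 2 / 6 * (∑' g : ℕ, (moebius g : ℝ) * (1 / (g:ℝ) ^ 2)) = 1 := by
    exact_mod_cast h
  have := Real.pi_pos
  field_simp at h3 ⊢
  linarith

open ArithmeticFunction in
lemma tendsto_prim {α β : ℝ} (hα : 0 < α) (hβ : 0 < β) :
    Tendsto (fun T : ℝ => ((prim (α * T) (β * T)).card : ℝ) / T ^ 2) atTop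
      (nhds (4 * α * β * (6 / Real.pi ^ 2))) := by
  obtain ⟨C, hC, hb⟩ := card_box0_le hα hβ
  rw [← tsum_moebius, ← tsum_mul_left]
  have e : ∀ T : ℝ, ((prim (α * T) (β * T)).card : ℝ) / T ^ 2 =
      ∑' g : ℕ, (moebius g : ℝ) * (((box (α * (T / g)) (β * (T / g))).erase 0).card : ℝ) / T ^ 2 := by
    intro T
    rw [prim_card_eq, ← tsum_div_const]
    simp only [mul_div_assoc]
  simp_rw [e]
  apply tendsto_tsum_of_dominated_convergence (bound := fun g : ℕ => C * (1 / (g:ℝ) ^ 2))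
  · exact (Real.summable_one_div_nat_pow.mpr (by norm_num)).mul_left C
  · intro g
    rcases Nat.eq_zero_or_pos g with rfl | hg
    · simp
    have hg0 : (0:ℝ) < g := by exact_mod_cast hg
    have h1 : Tendsto (fun T : ℝ => T / g) atTop atTop := tendsto_id.atTop_div_const hg0
    have := ((tendsto_box0 hα hβ).comp h1).mul_const ((moebius g : ℝ) * (1 / (g:ℝ) ^ 2))
    refine (this.congr' ?_).trans (by apply le_of_eq; congr 1)
    filter_upwards [eventually_gt_atTop 0] with T hT
    simp only [Function.comp]
    field_simp
  · filter_upwards [eventually_gt_atTop 0] with T hT g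
    rcases Nat.eq_zero_or_pos g with rfl | hg
    · simp
    have hg0 : (0:ℝ) < g := by exact_mod_cast hg
    have h1 := hb (T / g) (by positivity)
    have h2 : |(moebius g : ℝ)| ≤ 1 := by exact_mod_cast abs_moebius_le_one
    rw [Real.norm_eq_abs, abs_div, abs_mul, abs_of_nonneg (show 0 ≤ T ^ 2 by positivity),
      div_le_iff₀ (by positivity), Nat.abs_cast]
    calc _ ≤ 1 * (C * (T / g) ^ 2) := by gcongr
      _ = _ := by field_simp

/-- divisor bound -/
lemma card_divisors_cube_le {n : ℕ} (hn : n ≠ 0) : n.divisors.card ^ 3 ≤ 8 ^ 8 * n := by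
  have aux : ∀ v : ℕ, (v + 1) ^ 3 ≤ 8 * 2 ^ v := by
    intro v
    rcases Nat.lt_or_ge v 4 with h | h
    · interval_cases v <;> norm_num
    · induction v, h using Nat.le_induction with
      | base => norm_num
      | succ m hm ih =>
        rw [pow_succ 2 m]
        nlinarith [mul_self_nonneg (m - 4 : ℤ), Nat.mul_le_mul hm hm, Nat.mul_le_mul hm (Nat.mul_le_mul hm hm), Nat.mul_le_mul_left (m*m) hm]
  have aux2 : ∀ v : ℕ, (v + 1) ^ 3 ≤ 8 ^ v := by
    intro v
    have : v + 1 ≤ 2 ^ v := Nat.lt_two_pow_self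
    calc (v + 1) ^ 3 ≤ (2 ^ v) ^ 3 := Nat.pow_le_pow_left this 3
      _ = 8 ^ v := by rw [← pow_mul, mul_comm, pow_mul]; norm_num
  rw [Nat.card_divisors hn, ← Finset.prod_pow]
  calc ∏ p ∈ n.primeFactors, (n.factorization p + 1) ^ 3
      ≤ ∏ p ∈ n.primeFactors, ((if p < 8 then 8 else 1) * p ^ n.factorization p) := by
        apply Finset.prod_le_prod' 
        intro p hp
        have hp2 := (Nat.prime_of_mem_primeFactors hp).two_le
        split_ifs with h
        · exact (aux _).trans (Nat.mul_le_mul_left _ (Nat.pow_le_pow_left hp2 _))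
        · rw [one_mul]
          exact (aux2 _).trans (Nat.pow_le_pow_left (by omega) _)
    _ = (∏ p ∈ n.primeFactors, (if p < 8 then 8 else 1)) * n := by
        rw [Finset.prod_mul_distrib]
        congr 1
        exact Nat.prod_factorization_pow_eq_self hn
    _ ≤ 8 ^ 8 * n := by
        apply Nat.mul_le_mul_right
        rw [Finset.prod_ite, Finset.prod_const, Finset.prod_const_one, mul_one]
        apply Nat.pow_le_pow_right (by norm_num)
        calc _ ≤ (Finset.range 8).card := by
              apply Finset.card_le_card
              intro p hp
              simp at hp ⊢
              exact hp.2
          _ = 8 := by simp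

lemma coprime_zmod_iff {N m n : ℕ} :
    IsCoprime (m : ZMod N) (n : ZMod N) ↔ Nat.gcd (Nat.gcd m n) N = 1 := by
  constructor
  · rintro ⟨A, B, h⟩
    set g := Nat.gcd (Nat.gcd m n) N with hg
    have h1 : g ∣ N := Nat.gcd_dvd_right _ _
    have h2 : g ∣ m := (Nat.gcd_dvd_left _ _).trans (Nat.gcd_dvd_left _ _)
    have h3 : g ∣ n := (Nat.gcd_dvd_left _ _).trans (Nat.gcd_dvd_right _ _)
    have := congrArg (ZMod.castHom h1 (ZMod g)) h
    rw [map_add, map_mul, map_mul, map_natCast, map_natCast, map_one,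
      (ZMod.natCast_eq_zero_iff m g).mpr h2, (ZMod.natCast_eq_zero_iff n g).mpr h3] at this
    have h4 : ((1:ℕ) : ZMod g) = 0 := by push_cast; rw [← this]; ring
    exact Nat.dvd_one.mp ((ZMod.natCast_eq_zero_iff 1 g).mp h4)
  · intro h
    have h1 := Nat.gcd_eq_gcd_ab m n
    have h2 := Nat.gcd_eq_gcd_ab (Nat.gcd m n) N
    rw [h, h1] at h2
    have h3 := congrArg (Int.cast : ℤ → ZMod N) h2
    push_cast at h3
    rw [ZMod.natCast_self] at h3
    refine ⟨(m.gcdA n : ZMod N) * ((m.gcd n).gcdA N : ZMod N),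
      (m.gcdB n : ZMod N) * ((m.gcd n).gcdA N : ZMod N), Eq.trans ?_ h3.symm⟩
    ring

def dot {N : ℕ} (p : ZMod N × ZMod N) (q : ℤ × ℤ) : ZMod N :=
  p.1 * (q.1 : ZMod N) + p.2 * (q.2 : ZMod N)

lemma count_coprime (m d : ℕ) : Nat.count (fun n => Nat.Coprime m n) (d * m) = d * m.totient := by
  induction d with
  | zero => simp
  | succ d ih =>
    rw [add_mul, one_mul, Nat.count_add, ih, add_mul, one_mul]
    congr 1
    rw [Nat.totient_eq_card_coprime, ← Nat.count_eq_card_filter_range]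
    congr 1
    ext n
    rw [add_comm, mul_comm]
    simp

lemma card_second {N : ℕ} [NeZero N] {d : ℕ} (x : ZMod N) (hx : addOrderOf x = d) :
    Nat.card {y : ZMod N // IsCoprime x y} = d * (N / d).totient := by
  have hN : 0 < N := Nat.pos_of_ne_zero (NeZero.ne N)
  have hx' : x = ((x.val : ℕ) : ZMod N) := by simp
  have hd : d = N / Nat.gcd N x.val := by
    rw [← hx]; conv_lhs => rw [hx']
    rw [ZMod.addOrderOf_coe _ hN.ne']
  have hg : Nat.gcd N x.val ∣ N := Nat.gcd_dvd_left _ _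
  have hgd : N / d = Nat.gcd N x.val := by
    rw [hd, Nat.div_div_self hg hN.ne']
  have hdN : d * (N / d) = N := by rw [hgd, hd]; exact Nat.div_mul_cancel hg
  have := count_coprime (N / d) d
  rw [hdN, Nat.count_eq_card_filter_range] at this
  rw [← this, ← Nat.card_eq_finsetCard]
  apply Nat.card_congr
  refine ⟨fun y => ⟨y.1.val, ?_⟩, fun n => ⟨(n.1 : ZMod N), ?_⟩, ?_, ?_⟩
  · obtain ⟨y, h⟩ := y
    rw [Finset.mem_filter, Finset.mem_range]
    refine ⟨ZMod.val_lt _, ?_⟩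
    rw [hx', show y = ((y.val : ℕ) : ZMod N) by simp, coprime_zmod_iff] at h
    rw [hgd, Nat.Coprime, Nat.gcd_assoc, Nat.gcd_comm]
    exact h
  · obtain ⟨n, h⟩ := n
    rw [Finset.mem_filter, hgd, Nat.Coprime, Nat.gcd_assoc, Nat.gcd_comm] at h
    rw [hx', coprime_zmod_iff]
    exact h.2
  · intro y; simp
  · intro n
    have h := n.2
    rw [Finset.mem_filter, Finset.mem_range] at h
    apply Subtype.ext
    simp [ZMod.val_natCast, Nat.mod_eq_of_lt h.1]

open Classical in
noncomputable def cop (N : ℕ) [NeZero N] : Finset (ZMod N × ZMod N) :=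
  Finset.univ.filter (fun p => IsCoprime p.1 p.2)

lemma mem_cop {N : ℕ} [NeZero N] {p : ZMod N × ZMod N} : p ∈ cop N ↔ IsCoprime p.1 p.2 := by
  simp [cop]

lemma card_first {N : ℕ} [NeZero N] {d : ℕ} (hd : d ∣ N) :
    ((cop N).filter (fun p => addOrderOf p.1 = d)).card = d.totient * (d * (N / d).totient) := by
  classical
  have h1 : ((Finset.univ : Finset (ZMod N)).filter (fun x => addOrderOf x = d)).card
      = d.totient := by
    apply IsAddCyclic.card_addOrderOf_eq_totient
    rw [ZMod.card]; exact hd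
  rw [← h1, ← smul_eq_mul, ← Finset.sum_const]
  rw [Finset.card_eq_sum_card_fiberwise (f := Prod.fst)
    (t := (Finset.univ : Finset (ZMod N)).filter (fun x => addOrderOf x = d))]
  · apply Finset.sum_congr rfl
    intro x hx
    rw [Finset.mem_filter] at hx
    rw [← card_second x hx.2, ← Nat.card_eq_finsetCard]
    apply Nat.card_congr
    refine ⟨fun p => ⟨p.1.2, ?_⟩, fun y => ⟨(x, y.1), ?_⟩, ?_, ?_⟩
    · obtain ⟨p, h⟩ := p
      rw [Finset.mem_filter, Finset.mem_filter, mem_cop] at h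
      exact h.2 ▸ h.1.1
    · rw [Finset.mem_filter, Finset.mem_filter, mem_cop]
      exact ⟨⟨y.2, hx.2⟩, rfl⟩
    · intro p
      have h := p.2
      rw [Finset.mem_filter] at h
      exact Subtype.ext (Prod.ext h.2.symm rfl)
    · intro y; rfl
  · intro p hp
    simp at hp ⊢
    exact hp.2

lemma card_ord {N : ℕ} [NeZero N] {d : ℕ} (hd : d ∣ N) (w : ℤ × ℤ) (hw : Int.gcd w.1 w.2 = 1) :
    ((cop N).filter (fun p => addOrderOf (dot p w) = d)).card =
      d.totient * (d * (N / d).totient) := by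
  rw [← card_first hd]
  obtain ⟨u, v, huv⟩ := Int.isCoprime_iff_gcd_eq_one.mpr hw
  have huv' : (u : ZMod N) * (w.1 : ZMod N) + (v : ZMod N) * (w.2 : ZMod N) = 1 := by
    exact_mod_cast congrArg (Int.cast : ℤ → ZMod N) huv
  have inv1 : ∀ p : ZMod N × ZMod N,
      ((u : ZMod N) * (dot p w) - w.2 * (-v * p.1 + u * p.2) = p.1) ∧
      ((v : ZMod N) * (dot p w) + w.1 * (-v * p.1 + u * p.2) = p.2) := by
    intro p
    constructor
    · unfold dot; linear_combination p.1 * huv'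
    · unfold dot; linear_combination p.2 * huv'
  apply Finset.card_nbij' (fun p => (dot p w, -(v : ZMod N) * p.1 + (u : ZMod N) * p.2))
    (fun s => ((u : ZMod N) * s.1 - (w.2 : ZMod N) * s.2, (v : ZMod N) * s.1 + (w.1 : ZMod N) * s.2))
  · intro p hp
    simp only [Finset.coe_filter, Set.mem_ofPred_eq, mem_cop] at hp ⊢
    refine ⟨?_, hp.2⟩
    obtain ⟨A, B, h⟩ := hp.1
    obtain ⟨e1, e2⟩ := inv1 p
    refine ⟨A * u + B * v, -A * w.2 + B * w.1, ?_⟩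
    linear_combination h + A * e1 + B * e2
  · intro s hs
    simp only [Finset.coe_filter, Set.mem_ofPred_eq, mem_cop] at hs ⊢
    refine ⟨?_, ?_⟩
    · obtain ⟨A, B, h⟩ := hs.1
      refine ⟨A * w.1 - B * v, A * w.2 + B * u, ?_⟩
      linear_combination h + (A * s.1 + B * s.2) * huv'
    · rw [← hs.2]; congr 1
      unfold dot
      linear_combination s.1 * huv'
  · intro p _
    exact Prod.ext (inv1 p).1 (inv1 p).2
  · intro s _
    apply Prod.ext
    · simp only [dot]; linear_combination s.1 * huv'
    · simp only []; linear_combination s.2 * huv'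

lemma card_cop {N : ℕ} [NeZero N] :
    (cop N).card = ∑ d ∈ N.divisors, d.totient * (d * (N / d).totient) := by
  rw [Finset.card_eq_sum_card_fiberwise (f := fun p => addOrderOf p.1) (t := N.divisors)]
  · apply Finset.sum_congr rfl
    intro d hd
    exact card_first (Nat.dvd_of_mem_divisors hd)
  · intro p _
    simp only [Finset.mem_coe, Nat.mem_divisors]
    refine ⟨?_, NeZero.ne N⟩
    have := addOrderOf_dvd_card (x := p.1)
    rwa [ZMod.card] at this

/-! Geometry -/

lemma par_of_det {w q : ℤ × ℤ} (hw : Int.gcd w.1 w.2 = 1) (h : q.1 * w.2 = q.2 * w.1) :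
    ∃ t : ℤ, q.1 = t * w.1 ∧ q.2 = t * w.2 := by
  obtain ⟨u, v, huv⟩ := Int.isCoprime_iff_gcd_eq_one.mpr hw
  refine ⟨q.1 * u + q.2 * v, ?_, ?_⟩
  · linear_combination (-q.1) * huv + v * h
  · linear_combination (-q.2) * huv - u * h

lemma det_zero {N : ℕ} [NeZero N] {p : ZMod N × ZMod N} (hp : IsCoprime p.1 p.2) {X Y : ℝ}
    (hXY : 2 * X * Y ≤ N) {u v : ℤ × ℤ}
    (hu : u ∈ box X Y) (hv : v ∈ box X Y) (hu0 : dot p u = 0) (hv0 : dot p v = 0) :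
    u.1 * v.2 = u.2 * v.1 := by
  obtain ⟨A, B, h⟩ := hp
  unfold dot at hu0 hv0
  have h1 : ((u.1 * v.2 - u.2 * v.1 : ℤ) : ZMod N) = 0 := by
    push_cast
    linear_combination (-(u.1 * v.2 - u.2 * v.1 : ZMod N)) * h +
      A * (v.2 * hu0 - u.2 * hv0) + B * (u.1 * hv0 - v.1 * hu0)
  rw [ZMod.intCast_zmod_eq_zero_iff_dvd] at h1
  rw [mem_box] at hu hv
  have h2 : |u.1 * v.2 - u.2 * v.1| < (N : ℤ) := by
    have : |(u.1:ℝ) * v.2 - u.2 * v.1| < (N : ℝ) := by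
      have a1 : |(u.1:ℝ)| * |(v.2:ℝ)| < X * Y :=
        mul_lt_mul'' hu.1 hv.2 (abs_nonneg _) (abs_nonneg _)
      have a2 : |(v.1:ℝ)| * |(u.2:ℝ)| < X * Y :=
        mul_lt_mul'' hv.1 hu.2 (abs_nonneg _) (abs_nonneg _)
      calc _ ≤ |(u.1:ℝ) * v.2| + |(u.2:ℝ) * v.1| := abs_sub _ _
        _ = |(u.1:ℝ)| * |(v.2:ℝ)| + |(v.1:ℝ)| * |(u.2:ℝ)| := by
          rw [abs_mul, abs_mul, mul_comm |(u.2:ℝ)|]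
        _ < N := by linarith
    exact_mod_cast this
  have := Int.eq_zero_of_abs_lt_dvd h1 h2
  linarith

lemma dot_smul {N : ℕ} (p : ZMod N × ZMod N) (w q : ℤ × ℤ) (t : ℤ)
    (h1 : q.1 = t * w.1) (h2 : q.2 = t * w.2) : dot p q = t • dot p w := by
  unfold dot
  rw [h1, h2, zsmul_eq_mul]; push_cast; ring

open Classical in
noncomputable def sol {N : ℕ} (p : ZMod N × ZMod N) (X Y : ℝ) : Finset (ℤ × ℤ) :=
  (box X Y).filter (fun q => dot p q = 0)

lemma mem_sol {N : ℕ} {p : ZMod N × ZMod N} {X Y : ℝ} {q : ℤ × ℤ} :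
    q ∈ sol p X Y ↔ q ∈ box X Y ∧ dot p q = 0 := by
  simp [sol]

open Classical in
noncomputable def Wset {N : ℕ} (p : ZMod N × ZMod N) (X Y : ℝ) (k : ℕ) : Finset (ℤ × ℤ) :=
  (prim X Y).filter (fun w =>
    w ∈ box (X / (k * addOrderOf (dot p w) : ℕ)) (Y / (k * addOrderOf (dot p w) : ℕ)))

/-- being in the scaled box -/
lemma mem_box_div {X Y : ℝ} {w : ℤ × ℤ} {n : ℕ} (hn : 0 < n) :
    w ∈ box (X / n) (Y / n) ↔ ((n:ℤ) * w.1, (n:ℤ) * w.2) ∈ box X Y := by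
  have hn0 : (0:ℝ) < n := by exact_mod_cast hn
  rw [mem_box, mem_box, lt_div_iff₀ hn0, lt_div_iff₀ hn0]
  push_cast
  rw [abs_mul, abs_mul, abs_of_pos hn0, mul_comm (n:ℝ), mul_comm (n:ℝ)]

lemma mem_box_mono {X Y : ℝ} {w : ℤ × ℤ} {m n : ℤ} (hmn : |m| ≤ |n|)
    (h : (n * w.1, n * w.2) ∈ box X Y) : (m * w.1, m * w.2) ∈ box X Y := by
  rw [mem_box] at h ⊢
  have h' : |(m:ℝ)| ≤ |(n:ℝ)| := by exact_mod_cast hmn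
  push_cast at h ⊢
  rw [abs_mul, abs_mul] at h ⊢
  exact ⟨lt_of_le_of_lt (mul_le_mul_of_nonneg_right h' (abs_nonneg _)) h.1,
    lt_of_le_of_lt (mul_le_mul_of_nonneg_right h' (abs_nonneg _)) h.2⟩

lemma mem_Wset {N : ℕ} [NeZero N] {p : ZMod N × ZMod N} {X Y : ℝ} {k : ℕ} (hk : 0 < k)
    {w : ℤ × ℤ} :
    w ∈ Wset p X Y k ↔ Int.gcd w.1 w.2 = 1 ∧
      (((k * addOrderOf (dot p w) : ℕ) : ℤ) * w.1, ((k * addOrderOf (dot p w) : ℕ) : ℤ) * w.2)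
        ∈ box X Y := by
  have hpos : 0 < k * addOrderOf (dot p w) := Nat.mul_pos hk (addOrderOf_pos _)
  rw [Wset, prim, Finset.mem_filter, Finset.mem_filter, mem_box_div hpos]
  constructor
  · rintro ⟨⟨_, h1⟩, h2⟩; exact ⟨h1, h2⟩
  · rintro ⟨h1, h2⟩
    refine ⟨⟨?_, h1⟩, h2⟩
    have := mem_box_mono (m := 1) (by
      rw [abs_one, Nat.abs_cast]; exact_mod_cast hpos) h2
    simpa using this

lemma geo {N : ℕ} [NeZero N] {p : ZMod N × ZMod N} (hp : IsCoprime p.1 p.2) {X Y : ℝ}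
    (hX : 0 < X) (hY : 0 < Y) (hXY : 2 * X * Y ≤ N) :
    ∃ m : ℕ, (sol p X Y).card = 2 * m + 1 ∧
      ∀ k : ℕ, 0 < k → (Wset p X Y k).card = if k ≤ m then 2 else 0 := by
  classical
  -- elements of Wset give nonzero solutions
  have hW : ∀ k : ℕ, 0 < k → ∀ w ∈ Wset p X Y k,
      ((addOrderOf (dot p w) : ℤ) * w.1, (addOrderOf (dot p w) : ℤ) * w.2) ∈ sol p X Y := by
    intro k hk w hw
    rw [mem_Wset hk] at hw
    rw [mem_sol]
    constructor
    · refine mem_box_mono ?_ hw.2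
      rw [Nat.abs_cast, Nat.abs_cast]
      exact_mod_cast Nat.le_mul_of_pos_left _ hk
    · rw [dot_smul p w _ (addOrderOf (dot p w) : ℤ) rfl rfl, natCast_zsmul,
        addOrderOf_nsmul_eq_zero]
  have hne : ∀ w : ℤ × ℤ, Int.gcd w.1 w.2 = 1 → w.1 ≠ 0 ∨ w.2 ≠ 0 := by
    intro w hw
    by_contra h
    push Not at h
    rw [h.1, h.2] at hw
    simp at hw
  by_cases hex : ∃ v ∈ sol p X Y, v ≠ 0
  · obtain ⟨v, hv, hv0⟩ := hex
    have hg : 0 < Int.gcd v.1 v.2 := by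
      rw [Int.gcd_pos_iff]
      by_contra h
      push Not at h
      exact hv0 (Prod.ext h.1 h.2)
    obtain ⟨x, y, hxy, hx, hy⟩ : ∃ x y : ℤ, Int.gcd x y = 1 ∧ v.1 = Int.gcd v.1 v.2 * x ∧
        v.2 = Int.gcd v.1 v.2 * y := by
      refine ⟨v.1 / Int.gcd v.1 v.2, v.2 / Int.gcd v.1 v.2, Int.gcd_ediv_gcd_ediv_gcd hg,
        (Int.mul_ediv_cancel' (Int.gcd_dvd_left ..)).symm,
        (Int.mul_ediv_cancel' (Int.gcd_dvd_right ..)).symm⟩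
    set g := Int.gcd v.1 v.2 with hgdef
    set w : ℤ × ℤ := (x, y) with hwdef
    have hw1 : Int.gcd w.1 w.2 = 1 := hxy
    set d := addOrderOf (dot p w) with hd
    have hdpos : 0 < d := addOrderOf_pos _
    have hgz : (g:ℤ) ≠ 0 := by omega
    -- every solution is a multiple of d w
    have hpar : ∀ q ∈ sol p X Y, ∃ t : ℤ, q.1 = t * w.1 ∧ q.2 = t * w.2 := by
      intro q hq
      rw [mem_sol] at hq hv
      have := det_zero hp hXY hq.1 hv.1 hq.2 hv.2
      apply par_of_det hw1
      rw [hx, hy] at this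
      apply mul_left_cancel₀ hgz
      show (g:ℤ) * (q.1 * y) = g * (q.2 * x)
      linarith
    have hmul : ∀ q ∈ sol p X Y, ∃ j : ℤ, q.1 = (j * d) * w.1 ∧ q.2 = (j * d) * w.2 := by
      intro q hq
      obtain ⟨t, ht1, ht2⟩ := hpar q hq
      rw [mem_sol] at hq
      have h0 := hq.2
      rw [dot_smul p w q t ht1 ht2, ← addOrderOf_dvd_iff_zsmul_eq_zero] at h0
      obtain ⟨j, hj⟩ := h0
      exact ⟨j, by rw [ht1, hj]; ring, by rw [ht2, hj]; ring⟩
    let Q : ℕ → Prop := fun j => (((j * d : ℕ) : ℤ) * w.1, ((j * d : ℕ) : ℤ) * w.2) ∈ box X Y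
    have hQ0 : Q 0 := by simp [Q, mem_box, hX, hY]
    have hQmono : ∀ i j : ℕ, i ≤ j → Q j → Q i := by
      intro i j hij hj
      refine mem_box_mono ?_ hj
      rw [Nat.abs_cast, Nat.abs_cast]
      exact_mod_cast Nat.mul_le_mul_right d hij
    have hQex : ∃ j : ℕ, ¬ Q (j + 1) := by
      obtain ⟨M, hM⟩ := exists_nat_ge (max X Y)
      refine ⟨M, fun h => ?_⟩
      simp only [Q, mem_box] at h
      have hb : ∀ z : ℤ, z ≠ 0 → (M:ℝ) ≤ |((((M + 1) * d : ℕ) : ℤ) * z : ℤ)| := by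
        intro z hz
        have h1 : (1:ℤ) ≤ |z| := Int.one_le_abs hz
        have h2 : (M:ℤ) ≤ ((M + 1) * d : ℕ) := by
          have : M + 1 ≤ (M + 1) * d := Nat.le_mul_of_pos_right _ hdpos
          omega
        have : (M:ℤ) ≤ |(((M + 1) * d : ℕ) : ℤ) * z| := by
          rw [abs_mul, Nat.abs_cast]
          nlinarith
        exact_mod_cast this
      rcases hne w hw1 with h0 | h0
      · have := hb _ h0
        have h3 := h.1
        have h4 := le_max_left X Y
        push_cast at this h3
        linarith
      · have := hb _ h0
        have h3 := h.2
        have h4 := le_max_right X Y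
        push_cast at this h3
        linarith
    have hQm : ∀ k : ℕ, Q k ↔ k ≤ Nat.find hQex := by
      intro k
      constructor
      · intro hk
        by_contra h
        push Not at h
        exact Nat.find_spec hQex (hQmono _ _ h hk)
      · intro hk
        rcases Nat.eq_zero_or_pos k with rfl | hk0
        · exact hQ0
        · have := Nat.find_min hQex (m := k - 1) (by omega)
          rw [not_not, Nat.sub_add_cancel hk0] at this
          exact this
    generalize Nat.find hQex = m at hQm
    have hQz : ∀ j : ℤ, ((j * d) * w.1, (j * d) * w.2) ∈ box X Y ↔ |j| ≤ m := by
      intro j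
      have : |j| ≤ m ↔ j.natAbs ≤ m := by rw [Int.abs_eq_natAbs]; omega
      rw [this, ← hQm]
      have e : |j * (d:ℤ)| = |(((j.natAbs * d : ℕ)) : ℤ)| := by
        rw [abs_mul, Nat.abs_cast, Nat.abs_cast, Nat.cast_mul, Int.natCast_natAbs]
      exact ⟨mem_box_mono e.ge, mem_box_mono e.le⟩
    refine ⟨m, ?_, ?_⟩
    · have : sol p X Y = (Finset.Icc (-(m:ℤ)) m).image (fun j : ℤ => ((j * d) * w.1, (j * d) * w.2)) := by
        ext q
        rw [Finset.mem_image]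
        constructor
        · intro hq
          obtain ⟨j, h1, h2⟩ := hmul q hq
          have hqe : ((j * d) * w.1, (j * d) * w.2) = q := Prod.ext h1.symm h2.symm
          refine ⟨j, ?_, hqe⟩
          rw [mem_sol, ← hqe, hQz, abs_le] at hq
          exact Finset.mem_Icc.mpr hq.1
        · rintro ⟨j, hj, rfl⟩
          rw [mem_sol, hQz, abs_le]
          refine ⟨Finset.mem_Icc.mp hj, ?_⟩
          rw [dot_smul p w _ (j * d) rfl rfl, ← addOrderOf_dvd_iff_zsmul_eq_zero]
          exact Dvd.intro_left _ rfl
      rw [this, Finset.card_image_of_injective, Int.card_Icc]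
      · omega
      · intro i j hij
        have e1 := congrArg Prod.fst hij
        have e2 := congrArg Prod.snd hij
        simp only at e1 e2
        have hdz : (d:ℤ) ≠ 0 := by omega
        rcases hne w hw1 with h0 | h0
        · exact mul_right_cancel₀ hdz (mul_right_cancel₀ h0 e1)
        · exact mul_right_cancel₀ hdz (mul_right_cancel₀ h0 e2)
    · intro k hk
      have hneg : dot p (-w) = - dot p w := by
        unfold dot; push_cast [Prod.fst_neg, Prod.snd_neg]; ring
      have hW2 : ∀ w' ∈ Wset p X Y k, w' = w ∨ w' = -w := by
        intro w' hw'
        obtain ⟨t, h1, h2⟩ := hpar _ (hW k hk w' hw')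
        rw [mem_Wset hk] at hw'
        have hd' : (addOrderOf (dot p w') : ℤ) ≠ 0 := by
          have := addOrderOf_pos (dot p w'); omega
        have hdet : w'.1 * w.2 = w'.2 * w.1 := by
          apply mul_left_cancel₀ hd'
          simp only at h1 h2
          linear_combination w.2 * h1 - w.1 * h2
        obtain ⟨s, hs1, hs2⟩ := par_of_det hw1 hdet
        have hs := hw'.1
        rw [hs1, hs2, Int.gcd_mul_left, hw1, mul_one] at hs
        rcases Int.natAbs_eq s with h | h
        · left; rw [h, hs] at hs1 hs2
          exact Prod.ext (by simpa using hs1) (by simpa using hs2)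
        · right; rw [h, hs] at hs1 hs2
          exact Prod.ext (by simpa using hs1) (by simpa using hs2)
      have hQk : w ∈ Wset p X Y k ↔ k ≤ m := by
        rw [mem_Wset hk, ← hQm]
        exact ⟨fun h => h.2, fun h => ⟨hw1, h⟩⟩
      have hQk' : -w ∈ Wset p X Y k ↔ k ≤ m := by
        rw [← hQk, mem_Wset hk, mem_Wset hk, hneg, addOrderOf_neg]
        simp [mem_box]
      have hww : w ≠ -w := by
        intro h
        have e1 := congrArg Prod.fst h
        have e2 := congrArg Prod.snd h
        rw [Prod.fst_neg] at e1
        rw [Prod.snd_neg] at e2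
        rcases hne w hw1 with h0 | h0 <;> omega
      split_ifs with hkm
      · have : Wset p X Y k = {w, -w} := by
          ext q
          rw [Finset.mem_insert, Finset.mem_singleton]
          refine ⟨hW2 q, ?_⟩
          rintro (rfl | rfl)
          · exact hQk.mpr hkm
          · exact hQk'.mpr hkm
        rw [this, Finset.card_pair hww]
      · rw [Finset.card_eq_zero, Finset.eq_empty_iff_forall_notMem]
        intro q hq
        rcases hW2 q hq with rfl | rfl
        · exact hkm (hQk.mp hq)
        · exact hkm (hQk'.mp hq)
  · push Not at hex
    refine ⟨0, ?_, ?_⟩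
    · have : sol p X Y = {0} := by
        ext q
        rw [Finset.mem_singleton]
        refine ⟨hex q, ?_⟩
        rintro rfl
        rw [mem_sol, mem_box]
        simp [hX, hY, dot]
      rw [this]; simp
    · intro k hk
      rw [if_neg (by omega), Finset.card_eq_zero, Finset.eq_empty_iff_forall_notMem]
      intro q hq
      have h1 := hex _ (hW k hk q hq)
      have h2 := addOrderOf_pos (dot p q)
      have h3 := (mem_Wset hk).mp hq
      have e1 : (addOrderOf (dot p q) : ℤ) * q.1 = 0 := congrArg Prod.fst h1
      have e2 : (addOrderOf (dot p q) : ℤ) * q.2 = 0 := congrArg Prod.snd h1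
      rw [mul_eq_zero] at e1 e2
      rcases hne q h3.1 with h0 | h0
      · exact h0 (e1.resolve_left (by omega))
      · exact h0 (e2.resolve_left (by omega))

/-! Assembly -/

lemma double_count {N : ℕ} [NeZero N] {X Y : ℝ} {k : ℕ} (hk : 0 < k) :
    ∑ p ∈ cop N, (Wset p X Y k).card =
      ∑ d ∈ N.divisors, d.totient * (d * (N / d).totient) *
        (prim (X / (k * d : ℕ)) (Y / (k * d : ℕ))).card := by
  classical
  have h1 : ∀ p ∈ cop N, (Wset p X Y k).card = ∑ d ∈ N.divisors,
      ((prim (X / (k * d : ℕ)) (Y / (k * d : ℕ))).filter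
        (fun w => addOrderOf (dot p w) = d)).card := by
    intro p _
    rw [Finset.card_eq_sum_card_fiberwise (f := fun w => addOrderOf (dot p w)) (t := N.divisors)]
    · apply Finset.sum_congr rfl
      intro d hd
      congr 1
      have hdpos : 0 < k * d := Nat.mul_pos hk (Nat.pos_of_mem_divisors hd)
      ext w
      rw [Finset.mem_filter, Finset.mem_filter, mem_Wset hk, prim, Finset.mem_filter,
        mem_box_div hdpos]
      constructor
      · rintro ⟨⟨h1, h2⟩, h3⟩
        rw [h3] at h2
        exact ⟨⟨h2, h1⟩, h3⟩
      · rintro ⟨⟨h1, h2⟩, h3⟩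
        rw [h3]
        exact ⟨⟨h2, h1⟩, rfl⟩
    · intro w _
      simp only [Finset.mem_coe, Nat.mem_divisors]
      refine ⟨?_, NeZero.ne N⟩
      have := addOrderOf_dvd_card (x := dot p w)
      rwa [ZMod.card] at this
  rw [Finset.sum_congr rfl h1, Finset.sum_comm]
  apply Finset.sum_congr rfl
  intro d hd
  have := Finset.sum_card_bipartiteAbove_eq_sum_card_bipartiteBelow (s := cop N)
    (t := prim (X / (k * d : ℕ)) (Y / (k * d : ℕ))) (fun p w => addOrderOf (dot p w) = d)
  simp only [Finset.bipartiteAbove, Finset.bipartiteBelow] at this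
  rw [this, Finset.sum_const_nat, mul_comm]
  intro w hw
  exact card_ord (Nat.dvd_of_mem_divisors hd) w (Finset.mem_filter.mp hw).2

noncomputable def Acount (N : ℕ) [NeZero N] (X Y : ℝ) (k : ℕ) : ℕ :=
  ((cop N).filter (fun p => 2 * k + 1 ≤ (sol p X Y).card)).card

lemma two_mul_Acount {N : ℕ} [NeZero N] {X Y : ℝ}
    (hX : 0 < X) (hY : 0 < Y) (hXY : 2 * X * Y ≤ N) {k : ℕ} (hk : 0 < k) :
    2 * Acount N X Y k = ∑ d ∈ N.divisors, d.totient * (d * (N / d).totient) *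
        (prim (X / (k * d : ℕ)) (Y / (k * d : ℕ))).card := by
  rw [← double_count hk, Acount, Finset.card_filter, Finset.mul_sum]
  apply Finset.sum_congr rfl
  intro p hp
  obtain ⟨m, h1, h2⟩ := geo (mem_cop.mp hp) hX hY hXY
  rw [h1, h2 k hk]
  by_cases h : k ≤ m
  · rw [if_pos h, if_pos (by omega), mul_one]
  · rw [if_neg h, if_neg (by omega), mul_zero]

/-- weights -/
noncomputable def wt (N d : ℕ) [NeZero N] : ℝ :=
  (d.totient : ℝ) * (N / d : ℕ).totient * (N / d : ℕ) / (cop N).card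

lemma cop_ge {N : ℕ} [NeZero N] : N * N.totient ≤ (cop N).card := by
  have hN : 0 < N := Nat.pos_of_ne_zero (NeZero.ne N)
  rw [card_cop]
  refine le_trans ?_ (Finset.single_le_sum (f := fun d => d.totient * (d * (N / d).totient))
    (fun _ _ => Nat.zero_le _) (Nat.mem_divisors_self N hN.ne'))
  rw [Nat.div_self hN]; simp [mul_comm]

lemma cop_pos {N : ℕ} [NeZero N] : 0 < (cop N).card := by
  have hN : 0 < N := Nat.pos_of_ne_zero (NeZero.ne N)
  exact lt_of_lt_of_le (Nat.mul_pos hN (Nat.totient_pos.mpr hN)) cop_ge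

lemma sum_wt {N : ℕ} [NeZero N] : ∑ d ∈ N.divisors, wt N d = 1 := by
  have hJ : (0:ℝ) < (cop N).card := by exact_mod_cast cop_pos
  unfold wt
  rw [← Finset.sum_div, div_eq_one_iff_eq hJ.ne', card_cop,
    ← Nat.sum_div_divisors N (fun d => d.totient * (d * (N / d).totient))]
  push_cast
  apply Finset.sum_congr rfl
  intro d hd
  rw [Nat.div_div_self (Nat.dvd_of_mem_divisors hd) (NeZero.ne N)]
  ring

lemma wt_nonneg {N d : ℕ} [NeZero N] : 0 ≤ wt N d := by unfold wt; positivity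

lemma wt_le {N d : ℕ} [NeZero N] (hd : d ∈ N.divisors) : wt N d ≤ 1 / d := by
  have hJ : (0:ℝ) < (cop N).card := by exact_mod_cast cop_pos
  have hdpos : (0:ℝ) < d := by exact_mod_cast Nat.pos_of_mem_divisors hd
  have hdN := Nat.mul_div_cancel' (Nat.dvd_of_mem_divisors hd)
  unfold wt
  rw [div_le_div_iff₀ hJ hdpos, one_mul]
  have h1 := Nat.totient_super_multiplicative d (N / d)
  rw [hdN] at h1
  have h2 : d.totient * (N / d).totient * (N / d) * d ≤ (cop N).card := by
    calc _ = (d * (N / d)) * (d.totient * (N / d).totient) := by ring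
      _ ≤ N * N.totient := by rw [hdN]; exact Nat.mul_le_mul_left _ h1
      _ ≤ _ := cop_ge
  exact_mod_cast h2

lemma tau_small {δ : ℝ} (hδ : 0 < δ) :
    ∀ᶠ N : ℕ in atTop, (N.divisors.card : ℝ) ≤ δ * Real.sqrt N := by
  have h1 : Tendsto (fun N : ℕ => Real.sqrt (N:ℝ)) atTop atTop :=
    Real.tendsto_sqrt_atTop.comp tendsto_natCast_atTop_atTop
  filter_upwards [h1.eventually_ge_atTop (8 ^ 8 / δ ^ 3), eventually_gt_atTop 0] with N hN hN0
  have h2 : (N.divisors.card : ℝ) ^ 3 ≤ 8 ^ 8 * N := by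
    exact_mod_cast card_divisors_cube_le hN0.ne'
  have h3 : Real.sqrt (N:ℝ) ^ 2 = N := Real.sq_sqrt (Nat.cast_nonneg _)
  apply le_of_pow_le_pow_left₀ (n := 3) (by norm_num) (by positivity)
  refine h2.trans ?_
  rw [div_le_iff₀ (by positivity)] at hN
  calc (8:ℝ) ^ 8 * N ≤ (Real.sqrt N * δ ^ 3) * N := by gcongr
    _ = (Real.sqrt N * δ ^ 3) * Real.sqrt N ^ 2 := by rw [h3]
    _ = _ := by ring

lemma Acount_main {a : ℝ} (ha : 0 < a) (ha2 : a ≤ 2) {k : ℕ} (hk : 0 < k) {ε : ℝ} (hε : 0 < ε) :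
    ∀ᶠ N : ℕ in atTop, ∀ [NeZero N],
      |(Acount N (Real.sqrt N / 2) (a * Real.sqrt N / 2) k : ℝ) / (cop N).card
        - 3 * a / Real.pi ^ 2 * (1 / (k:ℝ) ^ 2)| ≤ ε := by
  have hk0 : (0:ℝ) < k := by exact_mod_cast hk
  have hpi := Real.pi_pos
  set α : ℝ := 1 / (2 * k) with hα
  set β : ℝ := a / (2 * k) with hβ
  have hα0 : 0 < α := by positivity
  have hβ0 : 0 < β := by positivity
  set L : ℝ := 4 * α * β * (6 / Real.pi ^ 2) with hL
  have hLe : 3 * a / Real.pi ^ 2 * (1 / (k:ℝ) ^ 2) = L / 2 := by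
    rw [hL, hα, hβ]; field_simp; norm_num
  have hL0 : 0 < L := by positivity
  obtain ⟨C, hC, hb⟩ := card_box0_le hα0 hβ0
  have hlim := tendsto_prim hα0 hβ0
  obtain ⟨T0, hT0⟩ : ∃ T0 : ℝ, ∀ T ≥ T0,
      |((prim (α * T) (β * T)).card : ℝ) / T ^ 2 - L| ≤ ε := by
    have := (Metric.tendsto_nhds.mp hlim) ε hε
    rw [eventually_atTop] at this
    obtain ⟨T0, h⟩ := this
    exact ⟨T0, fun T hT => (h T hT).le⟩
  have hT0' : ∀ T ≥ max T0 1,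
      |((prim (α * T) (β * T)).card : ℝ) / T ^ 2 - L| ≤ ε :=
    fun T hT => hT0 T (le_trans (le_max_left _ _) hT)
  have hT1 : 0 < max T0 1 := lt_of_lt_of_le one_pos (le_max_right _ _)
  generalize max T0 1 = T1 at hT0' hT1
  have hbd : ∀ T : ℝ, 0 < T → |((prim (α * T) (β * T)).card : ℝ) / T ^ 2 - L| ≤ C + L := by
    intro T hT
    have h1 : ((prim (α * T) (β * T)).card : ℝ) ≤ C * T ^ 2 :=
      le_trans (by exact_mod_cast Finset.card_le_card prim_subset) (hb T hT)
    have h2 : ((prim (α * T) (β * T)).card : ℝ) / T ^ 2 ≤ C := by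
      rw [div_le_iff₀ (by positivity)]; exact h1
    have h3 : 0 ≤ ((prim (α * T) (β * T)).card : ℝ) / T ^ 2 := by positivity
    rw [abs_le]; constructor <;> linarith
  have hδ : 0 < ε / ((C + L) * T1) := by positivity
  filter_upwards [tau_small hδ, eventually_gt_atTop 0] with N htau hN0 inst
  have hN : (0:ℝ) < N := by exact_mod_cast hN0
  have hs : 0 < Real.sqrt (N:ℝ) := Real.sqrt_pos.mpr hN
  have hs2 : Real.sqrt (N:ℝ) ^ 2 = N := Real.sq_sqrt hN.le
  have hJ : (0:ℝ) < (cop N).card := by exact_mod_cast cop_pos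
  have hA := two_mul_Acount (N := N) (X := Real.sqrt N / 2) (Y := a * Real.sqrt N / 2)
    (by positivity) (by positivity) (by nlinarith) hk
  have hA' : 2 * ((Acount N (Real.sqrt N / 2) (a * Real.sqrt N / 2) k : ℝ) / (cop N).card) =
      ∑ d ∈ N.divisors, wt N d *
        (((prim (α * (Real.sqrt N / d)) (β * (Real.sqrt N / d))).card : ℝ)
          / (Real.sqrt N / d) ^ 2) := by
    rw [← mul_div_assoc, show (2:ℝ) * (Acount N (Real.sqrt N / 2) (a * Real.sqrt N / 2) k : ℝ) =
      ((2 * Acount N (Real.sqrt N / 2) (a * Real.sqrt N / 2) k : ℕ) : ℝ) by push_cast; ring, hA,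
      Nat.cast_sum, Finset.sum_div]
    apply Finset.sum_congr rfl
    intro d hd
    have hdpos : (0:ℝ) < d := by exact_mod_cast Nat.pos_of_mem_divisors hd
    have e1 : Real.sqrt N / 2 / (k * d : ℕ) = α * (Real.sqrt N / d) := by
      rw [hα]; push_cast; field_simp
    have e2 : a * Real.sqrt N / 2 / (k * d : ℕ) = β * (Real.sqrt N / d) := by
      rw [hβ]; push_cast; field_simp
    rw [e1, e2, wt, div_pow, hs2, Nat.cast_div (Nat.dvd_of_mem_divisors hd) hdpos.ne']
    push_cast
    field_simp
  have hdiff : 2 * ((Acount N (Real.sqrt N / 2) (a * Real.sqrt N / 2) k : ℝ) / (cop N).card) - L =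
      ∑ d ∈ N.divisors, wt N d *
        (((prim (α * (Real.sqrt N / d)) (β * (Real.sqrt N / d))).card : ℝ)
          / (Real.sqrt N / d) ^ 2 - L) := by
    simp_rw [mul_sub]
    rw [Finset.sum_sub_distrib, ← hA', ← Finset.sum_mul, sum_wt, one_mul]
  have hbound : |2 * ((Acount N (Real.sqrt N / 2) (a * Real.sqrt N / 2) k : ℝ) / (cop N).card) - L|
      ≤ 2 * ε := by
    rw [hdiff]
    calc _ ≤ ∑ d ∈ N.divisors, |wt N d *
        (((prim (α * (Real.sqrt N / d)) (β * (Real.sqrt N / d))).card : ℝ)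
          / (Real.sqrt N / d) ^ 2 - L)| := Finset.abs_sum_le_sum_abs _ _
      _ ≤ ∑ d ∈ N.divisors, (wt N d * ε + T1 / Real.sqrt N * (C + L)) := by
        apply Finset.sum_le_sum
        intro d hd
        have hdpos : (0:ℝ) < d := by exact_mod_cast Nat.pos_of_mem_divisors hd
        have hTpos : 0 < Real.sqrt N / d := by positivity
        rw [abs_mul, abs_of_nonneg wt_nonneg]
        by_cases hT : T1 ≤ Real.sqrt N / d
        · have h1 := mul_le_mul_of_nonneg_left (hT0' _ hT) (wt_nonneg (N := N) (d := d))
          have h2 : 0 ≤ T1 / Real.sqrt N * (C + L) := by positivity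
          linarith
        · push Not at hT
          have h1 : wt N d ≤ T1 / Real.sqrt N := by
            refine (wt_le hd).trans ?_
            rw [div_le_div_iff₀ hdpos hs]
            rw [div_lt_iff₀ hdpos] at hT
            linarith
          have h2 : wt N d * _ ≤ T1 / Real.sqrt N * (C + L) :=
            mul_le_mul h1 (hbd _ hTpos) (abs_nonneg _) (by positivity)
          have h3 : 0 ≤ wt N d * ε := mul_nonneg wt_nonneg hε.le
          linarith
      _ = ε + N.divisors.card * (T1 / Real.sqrt N * (C + L)) := by
        rw [Finset.sum_add_distrib, ← Finset.sum_mul, sum_wt, one_mul, Finset.sum_const,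
          nsmul_eq_mul]
      _ ≤ ε + (ε / ((C + L) * T1) * Real.sqrt N) * (T1 / Real.sqrt N * (C + L)) := by
        gcongr
      _ = 2 * ε := by field_simp; ring
  rw [hLe]
  rw [abs_le] at hbound ⊢
  constructor <;> linarith [hbound.1, hbound.2]

lemma Acount_tendsto {a : ℝ} (ha : 0 < a) (ha2 : a ≤ 2) {k : ℕ} (hk : 0 < k) :
    Tendsto (fun N : ℕ => (Acount (N + 1) (Real.sqrt (N + 1 : ℕ) / 2)
      (a * Real.sqrt (N + 1 : ℕ) / 2) k : ℝ) / (cop (N + 1)).card) atTop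
      (nhds (3 * a / Real.pi ^ 2 * (1 / (k:ℝ) ^ 2))) := by
  rw [Metric.tendsto_nhds]
  intro ε hε
  have h := (tendsto_add_atTop_nat 1).eventually
    (Acount_main ha ha2 hk (show 0 < ε / 2 by positivity))
  filter_upwards [h] with N hN
  rw [Real.dist_eq]
  exact lt_of_le_of_lt hN (by linarith)

open Classical in
lemma transfer {N : ℕ} [NeZero N] (R : ZMod N × ZMod N → Prop) :
    Set.ncard {p : ℕ × ℕ | p.1 < N ∧ p.2 < N ∧ Nat.gcd (Nat.gcd p.1 p.2) N = 1 ∧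
      R ((p.1 : ZMod N), (p.2 : ZMod N))} = ((cop N).filter R).card := by
  rw [← Set.ncard_coe_finset]
  apply Set.ncard_congr (fun p _ => ((p.1 : ZMod N), (p.2 : ZMod N)))
  · rintro p ⟨h1, h2, h3, h4⟩
    rw [Finset.mem_coe, Finset.mem_filter, mem_cop]
    exact ⟨coprime_zmod_iff.mpr h3, h4⟩
  · rintro p q ⟨h1, h2, h3, h4⟩ ⟨h1', h2', h3', h4'⟩ h
    have e1 := congrArg (fun z => ZMod.val z.1) h
    have e2 := congrArg (fun z => ZMod.val z.2) h
    simp only [ZMod.val_natCast, Nat.mod_eq_of_lt h1, Nat.mod_eq_of_lt h1', Nat.mod_eq_of_lt h2,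
      Nat.mod_eq_of_lt h2'] at e1 e2
    exact Prod.ext e1 e2
  · intro s hs
    rw [Finset.mem_coe, Finset.mem_filter, mem_cop] at hs
    have hs1 : ((s.1.val : ℕ) : ZMod N) = s.1 := by simp
    have hs2 : ((s.2.val : ℕ) : ZMod N) = s.2 := by simp
    refine ⟨(s.1.val, s.2.val), ⟨ZMod.val_lt _, ZMod.val_lt _, ?_, ?_⟩, Prod.ext hs1 hs2⟩
    · rw [← coprime_zmod_iff, hs1, hs2]; exact hs.1
    · simp only [hs1, hs2]; exact hs.2

lemma ncard_sol {N : ℕ} {p : ZMod N × ZMod N} {X Y : ℝ} :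
    Set.ncard {q : ℤ × ℤ | (|q.1| : ℝ) < X ∧ (|q.2| : ℝ) < Y ∧
      p.1 * (q.1 : ZMod N) + p.2 * (q.2 : ZMod N) = 0} = (sol p X Y).card := by
  rw [← Set.ncard_coe_finset]
  congr 1
  ext q
  rw [Finset.mem_coe, mem_sol, mem_box, and_assoc]
  rfl

/-- For `0 < a ≤ 2` and an integer `r ≥ 1`, the proportion of pairs
`(r₁,r₂) ∈ {0,…,N−1}²` with `gcd(r₁,r₂,N) = 1` such that the congruence
`r₁x + r₂y ≡ 0 (mod N)` has exactly `r` integer solutions in the box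
`A_N(a) = (−√N/2, √N/2) × (−a√N/2, a√N/2)` tends to `c_{2,r}(a)`, where `c_{2,r}(a) = 0`
for even `r`, `c_{2,1}(a) = 1 − 3a/π²`, and `c_{2,2k+1}(a) = (3a/π²)(1/k² − 1/(k+1)²)`
for `k ≥ 1`. -/
theorem prob_exactly_r_short_solutions (a : ℝ) (ha : 0 < a) (ha2 : a ≤ 2)
    (r : ℕ) (hr : 1 ≤ r) :
    Tendsto (fun N : ℕ =>
      (Set.ncard {p : ℕ × ℕ | p.1 < N ∧ p.2 < N ∧ Nat.gcd (Nat.gcd p.1 p.2) N = 1 ∧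
          Set.ncard {q : ℤ × ℤ |
            (|q.1| : ℝ) < Real.sqrt N / 2 ∧ (|q.2| : ℝ) < a * Real.sqrt N / 2 ∧
            (p.1 : ZMod N) * (q.1 : ZMod N) + (p.2 : ZMod N) * (q.2 : ZMod N) = 0} = r} : ℝ) /
        (Set.ncard {p : ℕ × ℕ |
          p.1 < N ∧ p.2 < N ∧ Nat.gcd (Nat.gcd p.1 p.2) N = 1} : ℝ))
      atTop
      (nhds (if Even r then 0
        else if r = 1 then 1 - 3 * a / Real.pi ^ 2
        else (3 * a / Real.pi ^ 2) *
          (1 / ((((r - 1) / 2 : ℕ) : ℝ) ^ 2) - 1 / ((((r - 1) / 2 : ℕ) : ℝ) + 1) ^ 2))) := by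
  rw [← tendsto_add_atTop_iff_nat 1]
  have hden : ∀ N : ℕ, Set.ncard {p : ℕ × ℕ |
      p.1 < N + 1 ∧ p.2 < N + 1 ∧ Nat.gcd (Nat.gcd p.1 p.2) (N + 1) = 1} = (cop (N + 1)).card := by
    intro N
    have := transfer (N := N + 1) (fun _ => True)
    simpa using this
  have hnum : ∀ N : ℕ, Set.ncard {p : ℕ × ℕ | p.1 < N + 1 ∧ p.2 < N + 1 ∧
      Nat.gcd (Nat.gcd p.1 p.2) (N + 1) = 1 ∧
          Set.ncard {q : ℤ × ℤ |
            (|q.1| : ℝ) < Real.sqrt (N + 1 : ℕ) / 2 ∧ (|q.2| : ℝ) < a * Real.sqrt (N + 1 : ℕ) / 2 ∧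
            (p.1 : ZMod (N + 1)) * (q.1 : ZMod (N + 1)) +
              (p.2 : ZMod (N + 1)) * (q.2 : ZMod (N + 1)) = 0} = r} =
      ((cop (N + 1)).filter (fun p => (sol p (Real.sqrt (N + 1 : ℕ) / 2)
        (a * Real.sqrt (N + 1 : ℕ) / 2)).card = r)).card := by
    intro N
    classical
    have := transfer (N := N + 1) (fun p => (sol p (Real.sqrt (N + 1 : ℕ) / 2)
        (a * Real.sqrt (N + 1 : ℕ) / 2)).card = r)
    simp only [← ncard_sol] at this ⊢
    convert this
  simp only [hden, hnum]
  have hpos : ∀ N : ℕ, (0:ℝ) < Real.sqrt (N + 1 : ℕ) := fun N =>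
    Real.sqrt_pos.mpr (by positivity)
  have hgeo : ∀ N : ℕ, ∀ p ∈ cop (N + 1), ∃ m : ℕ, (sol p (Real.sqrt (N + 1 : ℕ) / 2)
        (a * Real.sqrt (N + 1 : ℕ) / 2)).card = 2 * m + 1 := by
    intro N p hp
    have h0 := hpos N
    have hs2 : Real.sqrt ((N + 1 : ℕ) : ℝ) ^ 2 = (N + 1 : ℕ) := Real.sq_sqrt (by positivity)
    have hN : (0:ℝ) < (N + 1 : ℕ) := by positivity
    obtain ⟨m, hm, _⟩ := geo (mem_cop.mp hp) (X := Real.sqrt (N + 1 : ℕ) / 2)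
        (Y := a * Real.sqrt (N + 1 : ℕ) / 2) (by positivity) (by positivity) (by nlinarith)
    exact ⟨m, hm⟩
  rcases Nat.even_or_odd r with hre | hro
  · rw [if_pos hre]
    have : ∀ N : ℕ, ((cop (N + 1)).filter (fun p => (sol p (Real.sqrt (N + 1 : ℕ) / 2)
        (a * Real.sqrt (N + 1 : ℕ) / 2)).card = r)).card = 0 := by
      intro N
      rw [Finset.card_eq_zero, Finset.filter_eq_empty_iff]
      intro p hp h
      obtain ⟨m, hm⟩ := hgeo N p hp
      obtain ⟨s, hs⟩ := hre
      omega
    simp only [this, Nat.cast_zero, zero_div]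
    exact tendsto_const_nhds
  · rw [if_neg (Nat.not_even_iff_odd.mpr hro)]
    obtain ⟨k, rfl⟩ := hro
    have hsub : ∀ N : ℕ, (((cop (N + 1)).filter (fun p => (sol p (Real.sqrt (N + 1 : ℕ) / 2)
        (a * Real.sqrt (N + 1 : ℕ) / 2)).card = 2 * k + 1)).card : ℝ) / (cop (N + 1)).card =
        (Acount (N + 1) (Real.sqrt (N + 1 : ℕ) / 2) (a * Real.sqrt (N + 1 : ℕ) / 2) k : ℝ)
          / (cop (N + 1)).card -
        (Acount (N + 1) (Real.sqrt (N + 1 : ℕ) / 2) (a * Real.sqrt (N + 1 : ℕ) / 2) (k + 1) : ℝ)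
          / (cop (N + 1)).card := by
      intro N
      rw [← sub_div]
      congr 1
      rw [eq_sub_iff_add_eq]
      have : ((cop (N + 1)).filter (fun p => (sol p (Real.sqrt (N + 1 : ℕ) / 2)
        (a * Real.sqrt (N + 1 : ℕ) / 2)).card = 2 * k + 1)).card +
        Acount (N + 1) (Real.sqrt (N + 1 : ℕ) / 2) (a * Real.sqrt (N + 1 : ℕ) / 2) (k + 1) =
        Acount (N + 1) (Real.sqrt (N + 1 : ℕ) / 2) (a * Real.sqrt (N + 1 : ℕ) / 2) k := by
        unfold Acount
        rw [Finset.card_filter, Finset.card_filter, Finset.card_filter, ← Finset.sum_add_distrib]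
        apply Finset.sum_congr rfl
        intro p hp
        obtain ⟨m, hm⟩ := hgeo N p hp
        rw [hm]
        split_ifs <;> omega
      exact_mod_cast this
    simp only [hsub]
    have h2 := Acount_tendsto ha ha2 (Nat.succ_pos k)
    rcases Nat.eq_zero_or_pos k with rfl | hk
    · have h1 : ∀ N : ℕ, (Acount (N + 1) (Real.sqrt (N + 1 : ℕ) / 2)
          (a * Real.sqrt (N + 1 : ℕ) / 2) 0 : ℝ) / (cop (N + 1)).card = 1 := by
        intro N
        have hJ : (0:ℝ) < (cop (N + 1)).card := by exact_mod_cast cop_pos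
        rw [div_eq_one_iff_eq hJ.ne', Acount]
        congr 2
        rw [Finset.filter_eq_self]
        intro p hp
        obtain ⟨m, hm⟩ := hgeo N p hp
        omega
      simp only [h1]
      rw [if_pos (by norm_num)]
      have := h2.const_sub 1
      simpa using this
    · rw [if_neg (by omega)]
      have h1 := Acount_tendsto ha ha2 hk
      have e : (2 * k + 1 - 1) / 2 = k := by omega
      rw [e, mul_sub]
      have := h1.sub h2
      push_cast at this ⊢
      exact this
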